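/- arXiv:2508.02484 — 3 statements merged into one kernel-verified Lean document; each statement's English description precedes it below -/
import Mathlib

section
/- Let 0 ≤ k ≤ n be integers and d = (d₁,…,dₙ) ∈ ℝⁿ with 0 ≤ d_j ≤ 1 for all j and d₁ + ⋯ + dₙ = k. Then there exists a matrix F ∈ Mat_{k×n}(ℂ) with F F* = I_k whose columns f₁,…,fₙ satisfy ‖f_j‖² = d_j for all j. (This is the existence half of the Schur–Horn theorem specialized to rank-k projections: every point of the polytope Δ_{n,k} is realized as the diagonal of a Hermitian projection of trace k.) -/
open Matrix

/-!
Rotating two columns of `F` in their plane leaves `F * Fᴴ` unchanged and fixes the sum of their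
squared norms, and a quarter turn exchanges these norms; by the intermediate value theorem every
transfer of squared norm between the two columns up to that exchange is therefore realized. A point
of the hypersimplex with a fractional coordinate has at least two of them, because its coordinates
sum to an integer, and it arises by such a transfer from a point with fewer fractional coordinates.
This reduces the problem to the vertices, which come from coordinate projections.
-/

open Real (cos sin)
open Set (Icc Ioo)

section TightFrames

variable {𝕜 κ ι : Type*} [RCLike 𝕜] [Fintype κ]

/-- The vector of squared norms of the columns of a matrix. -/
def colNormSq (F : Matrix κ ι 𝕜) (j : ι) : ℝ :=
  ∑ a, ‖F a j‖ ^ 2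

variable (𝕜 κ) in
/-- The vectors of squared column norms of the normalized tight frames in `Matrix κ ι 𝕜`;
equivalently, the diagonals of the orthogonal projections `Fᴴ * F` of rank `Fintype.card κ`. -/
def frameNormSqs (ι : Type*) [Fintype ι] [DecidableEq κ] : Set (ι → ℝ) :=
  colNormSq '' {F : Matrix κ ι 𝕜 | F * Fᴴ = 1}

theorem indicator_range_mem_frameNormSqs [Fintype ι] [DecidableEq κ] {f : κ → ι}
    (hf : f.Injective) : (Set.range f).indicator 1 ∈ frameNormSqs 𝕜 κ ι := by
  classical
  refine ⟨(1 : Matrix ι ι 𝕜).submatrix f id, ?_, ?_⟩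
  · rw [Set.mem_ofPred_eq, conjTranspose_submatrix, conjTranspose_one,
      ← submatrix_mul _ _ _ _ _ Function.bijective_id, mul_one, submatrix_one f hf]
  · ext j
    by_cases hj : j ∈ Set.range f
    · obtain ⟨a, rfl⟩ := hj
      simp [colNormSq, one_apply, hf.eq_iff, apply_ite, ite_pow]
    · have hne (a : κ) : f a ≠ j := fun h => hj ⟨a, h⟩
      simp [colNormSq, hj, hne]

end TightFrames

theorem sum_eq_sum_of_add_eq_add {ι M : Type*} [Fintype ι] [AddCommMonoid M] {f g : ι → M}
    {i j : ι} (hij : i ≠ j) (hpair : f i + f j = g i + g j)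
    (hrest : ∀ l, l ≠ i → l ≠ j → f l = g l) : ∑ l, f l = ∑ l, g l := by
  classical
  have hcompl : ∑ l ∈ {i, j}ᶜ, f l = ∑ l ∈ {i, j}ᶜ, g l := by
    refine Finset.sum_congr rfl fun l hl => ?_
    simp only [Finset.mem_compl, Finset.mem_insert, Finset.mem_singleton, not_or] at hl
    exact hrest l hl.1 hl.2
  rw [← Finset.sum_add_sum_compl {i, j} f, ← Finset.sum_add_sum_compl {i, j} g,
    Finset.sum_pair hij, Finset.sum_pair hij, hpair, hcompl]

section Rotation

variable {𝕜 κ ι : Type*} [RCLike 𝕜] [DecidableEq ι]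

/-- The matrix obtained from `F` by rotating the pair of columns `i`, `j` by the angle `t`; it is
meant for `i ≠ j`. -/
noncomputable def rotateCols (F : Matrix κ ι 𝕜) (i j : ι) (t : ℝ) : Matrix κ ι 𝕜 :=
  (F.updateCol i (cos t • F.col i - sin t • F.col j)).updateCol j
    (sin t • F.col i + cos t • F.col j)

variable (F : Matrix κ ι 𝕜) {i j l : ι} (t : ℝ)

theorem rotateCols_apply_left (hij : i ≠ j) (a : κ) :
    rotateCols F i j t a i = cos t • F a i - sin t • F a j := by
  simp [rotateCols, hij]

theorem rotateCols_apply_right (a : κ) :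
    rotateCols F i j t a j = sin t • F a i + cos t • F a j := by
  simp [rotateCols]

theorem rotateCols_apply_of_ne (hi : l ≠ i) (hj : l ≠ j) (a : κ) :
    rotateCols F i j t a l = F a l := by
  simp [rotateCols, hi, hj]

theorem rotateCols_mul_conjTranspose [Fintype ι] (hij : i ≠ j) :
    rotateCols F i j t * (rotateCols F i j t)ᴴ = F * Fᴴ := by
  ext a b
  simp only [mul_apply, conjTranspose_apply]
  refine sum_eq_sum_of_add_eq_add hij ?_ fun l hi hj => ?_
  · have hcs : (sin t : 𝕜) ^ 2 + (cos t : 𝕜) ^ 2 = 1 := by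
      exact_mod_cast Real.sin_sq_add_cos_sq t
    simp only [rotateCols_apply_left F t hij, rotateCols_apply_right, RCLike.real_smul_eq_coe_mul,
      star_sub, star_add, star_mul', RCLike.star_def, RCLike.conj_ofReal]
    linear_combination (F a i * (starRingEnd 𝕜) (F b i) + F a j * (starRingEnd 𝕜) (F b j)) * hcs
  · simp only [rotateCols_apply_of_ne F t hi hj]

variable [Fintype κ]

theorem colNormSq_rotateCols_add (hij : i ≠ j) :
    colNormSq (rotateCols F i j t) i + colNormSq (rotateCols F i j t) j =
      colNormSq F i + colNormSq F j := by
  simp only [colNormSq, ← Finset.sum_add_distrib, rotateCols_apply_left F t hij,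
    rotateCols_apply_right, RCLike.norm_sq_eq_def, map_add, map_sub, RCLike.smul_re, RCLike.smul_im]
  refine Finset.sum_congr rfl fun a _ => ?_
  linear_combination (RCLike.re (F a i) ^ 2 + RCLike.im (F a i) ^ 2 + RCLike.re (F a j) ^ 2 +
    RCLike.im (F a j) ^ 2) * Real.sin_sq_add_cos_sq t

theorem colNormSq_rotateCols_of_ne (hi : l ≠ i) (hj : l ≠ j) :
    colNormSq (rotateCols F i j t) l = colNormSq F l := by
  simp only [colNormSq, rotateCols_apply_of_ne F t hi hj]

theorem exists_colNormSq_rotateCols_eq (hij : i ≠ j) {x : ℝ}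
    (hx : x ∈ Icc (colNormSq F j) (colNormSq F i)) :
    ∃ t, colNormSq (rotateCols F i j t) i = x := by
  have hcont : Continuous fun t => colNormSq (rotateCols F i j t) i := by
    simp only [colNormSq, rotateCols_apply_left F _ hij]
    fun_prop
  refine mem_range_of_exists_le_of_exists_ge hcont ⟨Real.pi / 2, ?_⟩ ⟨0, ?_⟩
  · simpa [colNormSq, rotateCols_apply_left F _ hij] using hx.1
  · simpa [colNormSq, rotateCols_apply_left F _ hij] using hx.2

end Rotation

section Transfer

variable {ι : Type*} [DecidableEq ι]

/-- Transfer of the amount `s` from coordinate `i` to coordinate `j`. -/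
def transfer (d : ι → ℝ) (i j : ι) (s : ℝ) : ι → ℝ :=
  d - Pi.single i s + Pi.single j s

variable (d : ι → ℝ) {i j l : ι} (s : ℝ)

theorem transfer_apply_left (hij : i ≠ j) : transfer d i j s i = d i - s := by
  simp [transfer, hij]

theorem transfer_apply_right (hij : i ≠ j) : transfer d i j s j = d j + s := by
  simp [transfer, hij.symm]

theorem transfer_apply_of_ne (hi : l ≠ i) (hj : l ≠ j) : transfer d i j s l = d l := by
  simp [transfer, hi, hj]

theorem transfer_transfer_symm (i j : ι) : transfer (transfer d i j s) j i s = d := by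
  simp [transfer]

theorem sum_transfer [Fintype ι] (i j : ι) : ∑ l, transfer d i j s l = ∑ l, d l := by
  simp [transfer, Finset.sum_add_distrib, Finset.sum_sub_distrib]

end Transfer

section Hypersimplex

variable {ι : Type*} [Fintype ι]

variable (ι) in
/-- The hypersimplex `Δ_{n,k}`, with coordinates indexed by `ι`. -/
def hypersimplex (k : ℕ) : Set (ι → ℝ) :=
  {d | (∀ j, d j ∈ Icc 0 1) ∧ ∑ j, d j = k}

/-- The coordinates of a point of the unit cube that are not integers. -/
noncomputable def fractionalCoords (d : ι → ℝ) : Finset ι :=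
  {j | d j ∈ Ioo 0 1}

theorem mem_fractionalCoords {d : ι → ℝ} {j : ι} :
    j ∈ fractionalCoords d ↔ d j ∈ Ioo 0 1 := by
  simp [fractionalCoords]

theorem exists_ne_notMem_of_sum_mem {M : Type*} [AddCommGroup M] (H : AddSubgroup M)
    {f : ι → M} {i : ι} (hsum : ∑ l, f l ∈ H) (hi : f i ∉ H) : ∃ j, j ≠ i ∧ f j ∉ H := by
  classical
  by_contra! hrest
  rw [← Finset.add_sum_erase Finset.univ f (Finset.mem_univ i)] at hsum
  exact hi <| (H.add_mem_cancel_right <|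
    H.sum_mem fun j hj => hrest j (Finset.ne_of_mem_erase hj)).mp hsum

theorem notMem_range_intCast_of_mem_Ioo {x : ℝ} (hx : x ∈ Ioo 0 1) :
    x ∉ (Int.castAddHom ℝ).range := by
  rintro ⟨m, hm : (m : ℝ) = x⟩
  subst hm
  have hpos : 0 < m := Int.cast_pos.mp hx.1
  have hlt : m < 1 := by exact_mod_cast hx.2
  lia

theorem mem_Ioo_of_notMem_range_intCast {x : ℝ} (hx : x ∈ Icc 0 1)
    (hint : x ∉ (Int.castAddHom ℝ).range) : x ∈ Ioo 0 1 := by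
  refine ⟨hx.1.lt_of_ne ?_, hx.2.lt_of_ne ?_⟩
  · rintro rfl
    exact hint ⟨0, by simp⟩
  · rintro rfl
    exact hint ⟨1, by simp⟩

variable {k : ℕ} {d : ι → ℝ} {i j : ι}

theorem exists_ne_mem_fractionalCoords (hd : d ∈ hypersimplex ι k)
    (hi : i ∈ fractionalCoords d) : ∃ j, j ≠ i ∧ j ∈ fractionalCoords d := by
  have hsum : ∑ l, d l ∈ (Int.castAddHom ℝ).range := ⟨k, by simp [hd.2]⟩
  obtain ⟨j, hji, hj⟩ := exists_ne_notMem_of_sum_mem _ hsum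
    (notMem_range_intCast_of_mem_Ioo (mem_fractionalCoords.mp hi))
  exact ⟨j, hji, mem_fractionalCoords.mpr (mem_Ioo_of_notMem_range_intCast (hd.1 j) hj)⟩

variable [DecidableEq ι]

theorem transfer_mem_hypersimplex {s : ℝ} (hd : d ∈ hypersimplex ι k) (hij : i ≠ j) (hs : 0 ≤ s)
    (hi : s ≤ d i) (hj : s ≤ 1 - d j) : transfer d i j s ∈ hypersimplex ι k := by
  refine ⟨fun l => ?_, (sum_transfer d s i j).trans hd.2⟩
  rcases eq_or_ne l i with rfl | hli
  · rw [transfer_apply_left _ _ hij]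
    exact ⟨by linarith, by linarith [(hd.1 l).2]⟩
  rcases eq_or_ne l j with rfl | hlj
  · rw [transfer_apply_right _ _ hij]
    exact ⟨by linarith [(hd.1 l).1], by linarith⟩
  · rw [transfer_apply_of_ne _ _ hli hlj]
    exact hd.1 l

theorem fractionalCoords_transfer_min_ssubset (hij : i ≠ j) (hi : i ∈ fractionalCoords d)
    (hj : j ∈ fractionalCoords d) :
    fractionalCoords (transfer d i j (min (d i) (1 - d j))) ⊂ fractionalCoords d := by
  refine (Finset.ssubset_iff_of_subset fun l hl => ?_).mpr ?_
  · rcases eq_or_ne l i with rfl | hli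
    · exact hi
    rcases eq_or_ne l j with rfl | hlj
    · exact hj
    rwa [mem_fractionalCoords, transfer_apply_of_ne _ _ hli hlj, ← mem_fractionalCoords] at hl
  · rcases min_choice (d i) (1 - d j) with hmin | hmin
    · exact ⟨i, hi, by simp [mem_fractionalCoords, transfer_apply_left _ _ hij, hmin]⟩
    · exact ⟨j, hj, by simp [mem_fractionalCoords, transfer_apply_right _ _ hij, hmin]⟩

end Hypersimplex

section SchurHorn

variable {𝕜 κ ι : Type*} [RCLike 𝕜] [Fintype κ] [DecidableEq κ] [Fintype ι] {d : ι → ℝ}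

theorem transfer_mem_frameNormSqs [DecidableEq ι] {i j : ι} {s : ℝ}
    (hd : d ∈ frameNormSqs 𝕜 κ ι) (hij : i ≠ j) (hs : 0 ≤ s) (hsd : s ≤ d i - d j) :
    transfer d i j s ∈ frameNormSqs 𝕜 κ ι := by
  obtain ⟨F, hF, rfl⟩ := hd
  obtain ⟨t, ht⟩ := exists_colNormSq_rotateCols_eq F hij (x := colNormSq F i - s)
    ⟨by linarith, by linarith⟩
  refine ⟨rotateCols F i j t, (rotateCols_mul_conjTranspose F t hij).trans hF, ?_⟩
  ext l
  rcases eq_or_ne l i with rfl | hi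
  · rw [ht, transfer_apply_left _ _ hij]
  rcases eq_or_ne l j with rfl | hj
  · rw [transfer_apply_right _ _ hij]
    linarith [colNormSq_rotateCols_add F t hij]
  · rw [colNormSq_rotateCols_of_ne F t hi hj, transfer_apply_of_ne _ _ hi hj]

theorem mem_frameNormSqs_of_fractionalCoords_eq_empty (hd : d ∈ hypersimplex ι (Fintype.card κ))
    (hfrac : fractionalCoords d = ∅) : d ∈ frameNormSqs 𝕜 κ ι := by
  classical
  have hind : d = {j | d j = 1}.indicator 1 := by
    ext j
    have hj : d j ∉ Ioo 0 1 := by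
      rw [← mem_fractionalCoords, hfrac]
      exact Finset.notMem_empty j
    by_cases h1 : d j = 1
    · simp [h1]
    · have h0 : d j = 0 := by
        by_contra h0
        exact hj ⟨(hd.1 j).1.lt_of_ne' h0, (hd.1 j).2.lt_of_ne h1⟩
      simp [h0]
  have hcard : Fintype.card κ = Fintype.card {j | d j = 1} := by
    have hsum := hd.2
    rw [hind] at hsum
    simp only [Set.indicator_apply, Set.mem_ofPred_eq, Pi.one_apply, Finset.sum_boole,
      Nat.cast_inj] at hsum
    exact hsum.symm.trans (Fintype.card_subtype _).symm
  have e : κ ≃ {j | d j = 1} := Fintype.equivOfCardEq hcard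
  have hrange : Set.range (Subtype.val ∘ e) = {j | d j = 1} := by
    rw [e.surjective.range_comp, Subtype.range_coe]
  rw [hind, ← hrange]
  exact indicator_range_mem_frameNormSqs (Subtype.val_injective.comp e.injective)

theorem hypersimplex_subset_frameNormSqs :
    hypersimplex ι (Fintype.card κ) ⊆ frameNormSqs 𝕜 κ ι := by
  classical
  intro d hd
  induction hfrac : fractionalCoords d using Finset.strongInduction generalizing d with
  | H S ih =>
    subst hfrac
    rcases (fractionalCoords d).eq_empty_or_nonempty with hempty | ⟨i, hi⟩
    · exact mem_frameNormSqs_of_fractionalCoords_eq_empty hd hempty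
    obtain ⟨j, hji, hj⟩ := exists_ne_mem_fractionalCoords hd hi
    obtain ⟨hi0, hi1⟩ := mem_fractionalCoords.mp hi
    obtain ⟨hj0, hj1⟩ := mem_fractionalCoords.mp hj
    set s := min (d i) (1 - d j)
    have hs0 : 0 ≤ s := le_min hi0.le (by linarith)
    have htransfer : transfer d i j s ∈ frameNormSqs 𝕜 κ ι :=
      ih _ (fractionalCoords_transfer_min_ssubset hji.symm hi hj)
        (transfer_mem_hypersimplex hd hji.symm hs0 (min_le_left _ _) (min_le_right _ _)) rfl
    have hsd : s ≤ transfer d i j s j - transfer d i j s i := by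
      rw [transfer_apply_left _ _ hji.symm, transfer_apply_right _ _ hji.symm]
      rcases min_choice (d i) (1 - d j) with (hmin : s = _) | (hmin : s = _) <;> linarith
    simpa only [transfer_transfer_symm] using transfer_mem_frameNormSqs htransfer hji hs0 hsd

variable (𝕜 κ) in
theorem exists_frame_of_mem_polytope_general (hd : ∀ j, 0 ≤ d j ∧ d j ≤ 1)
    (hsum : ∑ j, d j = Fintype.card κ) :
    ∃ F : Matrix κ ι 𝕜, F * F.conjTranspose = 1 ∧ ∀ j, ∑ i, ‖F i j‖ ^ 2 = d j := by
  obtain ⟨F, hF, hFd⟩ := hypersimplex_subset_frameNormSqs (𝕜 := 𝕜) (κ := κ) ⟨hd, hsum⟩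
  exact ⟨F, hF, congrFun hFd⟩

end SchurHorn

theorem exists_frame_of_mem_polytope (n k : ℕ) (hkn : k ≤ n)
    (d : Fin n → ℝ) (hd : ∀ j : Fin n, 0 ≤ d j ∧ d j ≤ 1)
    (hsum : ∑ j : Fin n, d j = (k : ℝ)) :
    ∃ F : Matrix (Fin k) (Fin n) ℂ,
      F * F.conjTranspose = 1 ∧ ∀ j : Fin n, ∑ i : Fin k, ‖F i j‖ ^ 2 = d j :=
  exists_frame_of_mem_polytope_general ℂ (Fin k) hd (by simpa using hsum)
end

section
/- The level set μ⁻¹((1/3, 1/3, 1/3, 1)) ⊂ Gr_2(ℂ⁴), i.e. the set of matrices P ∈ Mat_{4×4}(ℂ) with P* = P, P² = P, tr(P) = 2 and diagonal entries (1/3, 1/3, 1/3, 1), equipped with the subspace topology from Mat_{4×4}(ℂ), is homeomorphic to the 2-torus S¹ × S¹, where S¹ is the unit circle in ℂ. -/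
open Matrix

/-- The level set `μ⁻¹(d)` of the Grassmannian `Gr_k(ℂⁿ)`: Hermitian projections `P` with
`tr P = k` whose diagonal entries are `d₁, …, dₙ`. -/
def GrassLevel (n k : ℕ) (d : Fin n → ℝ) : Set (Matrix (Fin n) (Fin n) ℂ) :=
  {P | P.conjTranspose = P ∧ P * P = P ∧ P.trace = (k : ℂ) ∧
    ∀ j : Fin n, P j j = (d j : ℂ)}

/-!
A diagonal entry `1` of a projection `P` means that `P` fixes the corresponding basis vector, so
this row and column may be deleted: `μ⁻¹(1/3, 1/3, 1/3, 1)` in `Gr₂(ℂ⁴)` is `μ⁻¹(1/3, 1/3, 1/3)` in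
`Gr₁(ℂ³)`. A projection of trace `1` fixing a unit vector `x` is `x x*`, because the difference of
the two is a projection of trace `0`. Such an `x` is unique up to a phase, which the condition
`0 < x₀` normalises; the diagonal prescribes the moduli of the coordinates, so what remains free is
the arguments of the last two.
-/

section StarProjection

theorem mulVec_col_of_isIdempotentElem {n R : Type*} [Fintype n] [NonUnitalNonAssocSemiring R]
    {P : Matrix n n R} (hP : IsIdempotentElem P) (j : n) : P *ᵥ P.col j = P.col j :=
  congrArg (·.col j) hP.eq

section Semiring

variable {n R : Type*} [Fintype n] [Semiring R] [StarRing R] {P : Matrix n n R} {x : n → R}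

theorem star_col_dotProduct_col_of_isStarProjection (hP : IsStarProjection P) (j : n) :
    star (P.col j) ⬝ᵥ P.col j = P j j :=
  calc star (P.col j) ⬝ᵥ P.col j = (star P * P) j j := rfl
    _ = P j j := by rw [hP.isSelfAdjoint.star_eq, hP.isIdempotentElem.eq]

theorem isStarProjection_vecMulVec_star (hx : star x ⬝ᵥ x = 1) :
    IsStarProjection (vecMulVec x (star x)) where
  isIdempotentElem := by
    rw [IsIdempotentElem, vecMulVec_mul_vecMulVec, hx, one_smul]
  isSelfAdjoint := by
    rw [IsSelfAdjoint, star_eq_conjTranspose, conjTranspose_vecMulVec, star_star]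

end Semiring

section StarOrderedRing

variable {n R : Type*} [Fintype n] [Ring R] [PartialOrder R] [StarRing R] [StarOrderedRing R]
  [NoZeroDivisors R] {P Q : Matrix n n R} {j : n}

theorem col_eq_zero_of_isStarProjection (hP : IsStarProjection P) (hj : P j j = 0) :
    P.col j = 0 := by
  rw [← dotProduct_star_self_eq_zero, star_col_dotProduct_col_of_isStarProjection hP, hj]

theorem col_eq_single_of_isStarProjection [DecidableEq n] (hP : IsStarProjection P)
    (hj : P j j = 1) : P.col j = Pi.single j 1 := by
  have hcol : (1 - P).col j = 0 := col_eq_zero_of_isStarProjection hP.one_sub (by simp [hj])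
  ext i
  have hij : (1 : Matrix n n R) i j - P i j = 0 := congrFun hcol i
  rw [col_apply, ← sub_eq_zero.mp hij, one_apply, Pi.single_apply]

theorem eq_zero_of_isStarProjection_of_trace_eq_zero (hP : IsStarProjection P)
    (htr : P.trace = 0) : P = 0 := by
  rw [← trace_conjTranspose_mul_self_eq_zero_iff, ← star_eq_conjTranspose,
    hP.isSelfAdjoint.star_eq, hP.isIdempotentElem.eq, htr]

theorem eq_of_isStarProjection_of_mul_eq_right (hP : IsStarProjection P)
    (hQ : IsStarProjection Q) (hPQ : P * Q = Q) (htr : P.trace = Q.trace) : P = Q :=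
  sub_eq_zero.mp <| eq_zero_of_isStarProjection_of_trace_eq_zero
    (hQ.sub_of_mul_eq_right hP hPQ) (by rw [trace_sub, htr, sub_self])

end StarOrderedRing

theorem eq_vecMulVec_star_of_trace_eq_one {n R : Type*} [Fintype n] [CommRing R] [PartialOrder R]
    [StarRing R] [StarOrderedRing R] [NoZeroDivisors R] {P : Matrix n n R} {x : n → R}
    (hP : IsStarProjection P) (htr : P.trace = 1) (hx : star x ⬝ᵥ x = 1) (hPx : P *ᵥ x = x) :
    P = vecMulVec x (star x) := by
  refine eq_of_isStarProjection_of_mul_eq_right hP (isStarProjection_vecMulVec_star hx) ?_ ?_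
  · rw [mul_vecMulVec, hPx]
  · rw [htr, trace_vecMulVec, dotProduct_comm, hx]

end StarProjection

section DirectSumOne

variable {m l : ℕ} {R : Type*} [Semiring R]

/-- The operator `P ⊕ 1` on `Rᵐ ⊕ Rˡ`, as a matrix in the concatenated standard basis. -/
def directSumOne (l : ℕ) (P : Matrix (Fin m) (Fin m) R) :
    Matrix (Fin (m + l)) (Fin (m + l)) R :=
  reindex finSumFinEquiv finSumFinEquiv (fromBlocks P 0 0 1)

theorem directSumOne_injective : Function.Injective (directSumOne (m := m) (R := R) l) :=
  fun _ _ h => (fromBlocks_inj.mp ((reindex finSumFinEquiv finSumFinEquiv).injective h)).1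

theorem directSumOne_mul (P Q : Matrix (Fin m) (Fin m) R) :
    directSumOne l (P * Q) = directSumOne l P * directSumOne l Q := by
  simp [directSumOne, fromBlocks_multiply]

theorem star_directSumOne [StarRing R] (P : Matrix (Fin m) (Fin m) R) :
    star (directSumOne l P) = directSumOne l (star P) := by
  simp [directSumOne, star_eq_conjTranspose, fromBlocks_conjTranspose]

theorem isStarProjection_directSumOne_iff [StarRing R] {P : Matrix (Fin m) (Fin m) R} :
    IsStarProjection (directSumOne l P) ↔ IsStarProjection P := by
  simp only [isStarProjection_iff, IsIdempotentElem, IsSelfAdjoint, star_directSumOne,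
    ← directSumOne_mul, directSumOne_injective.eq_iff]

theorem trace_directSumOne (P : Matrix (Fin m) (Fin m) R) :
    (directSumOne l P).trace = P.trace + l := by
  simp [directSumOne, trace, Fin.sum_univ_add]

end DirectSumOne

namespace GrassLevel

open scoped ComplexOrder

theorem mem_iff_isStarProjection {n k : ℕ} {d : Fin n → ℝ} {P : Matrix (Fin n) (Fin n) ℂ} :
    P ∈ GrassLevel n k d ↔ IsStarProjection P ∧ P.trace = k ∧ ∀ j, P j j = d j := by
  rw [isStarProjection_iff, and_comm (a := IsIdempotentElem P), and_assoc]
  rfl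

section AppendOne

variable {m k l : ℕ} {d : Fin m → ℝ}

theorem directSumOne_mem_iff {P : Matrix (Fin m) (Fin m) ℂ} :
    directSumOne l P ∈ GrassLevel (m + l) (k + l) (Fin.append d 1) ↔ P ∈ GrassLevel m k d := by
  simp only [mem_iff_isStarProjection, isStarProjection_directSumOne_iff, trace_directSumOne,
    Nat.cast_add, add_left_inj, Fin.forall_fin_add]
  simp [directSumOne]

theorem directSumOne_submatrix_castAdd {Q : Matrix (Fin (m + l)) (Fin (m + l)) ℂ}
    (hQ : Q ∈ GrassLevel (m + l) (k + l) (Fin.append d 1)) :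
    directSumOne l (Q.submatrix (Fin.castAdd l) (Fin.castAdd l)) = Q := by
  obtain ⟨hproj, -, hdiag⟩ := mem_iff_isStarProjection.mp hQ
  have hcol (i : Fin (m + l)) (j : Fin l) :
      Q i (Fin.natAdd m j) = (Pi.single (Fin.natAdd m j) 1 : Fin (m + l) → ℂ) i :=
    congrFun (col_eq_single_of_isStarProjection hproj (by simp [hdiag])) i
  have hne (i : Fin m) (j : Fin l) : Fin.castAdd l i ≠ Fin.natAdd m j :=
    Fin.ne_of_val_ne (i.2.trans_le (Nat.le_add_right m j)).ne
  have hrow (i : Fin l) (j : Fin m) : Q (Fin.natAdd m i) (Fin.castAdd l j) = 0 := by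
    rw [← hproj.isSelfAdjoint.star_eq, star_apply, hcol, Pi.single_eq_of_ne (hne j i), star_zero]
  ext i j
  induction i using Fin.addCases <;> induction j using Fin.addCases <;>
    simp [directSumOne, hcol, hrow, hne, one_apply, Pi.single_apply]

/-- Deletion of `l` coordinates on which the diagonal is `1`. -/
def appendOneHomeomorph (m k l : ℕ) (d : Fin m → ℝ) :
    GrassLevel (m + l) (k + l) (Fin.append d 1) ≃ₜ GrassLevel m k d where
  toFun Q := ⟨Q.1.submatrix (Fin.castAdd l) (Fin.castAdd l),
    directSumOne_mem_iff.mp <| (directSumOne_submatrix_castAdd Q.2).symm ▸ Q.2⟩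
  invFun P := ⟨directSumOne l P.1, directSumOne_mem_iff.mpr P.2⟩
  left_inv Q := Subtype.ext (directSumOne_submatrix_castAdd Q.2)
  right_inv P := by
    ext i j
    simp [directSumOne]
  continuous_toFun := (continuous_subtype_val.matrix_submatrix _ _).subtype_mk _
  continuous_invFun := Continuous.subtype_mk ((continuous_subtype_val.matrix_fromBlocks
    continuous_const continuous_const continuous_const).matrix_reindex _ _) _

end AppendOne

section RankOne

variable {n : ℕ}

theorem vecMulVec_star_mem_iff {d : Fin n → ℝ} (hsum : ∑ i, d i = 1) {x : Fin n → ℂ} :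
    vecMulVec x (star x) ∈ GrassLevel n 1 d ↔ ∀ i, ‖x i‖ ^ 2 = d i := by
  have hdiag (i : Fin n) : vecMulVec x (star x) i i = ((‖x i‖ ^ 2 : ℝ) : ℂ) := by
    simp [vecMulVec_apply, Complex.mul_conj']
  simp only [mem_iff_isStarProjection, hdiag, Complex.ofReal_inj]
  refine ⟨fun h => h.2.2, fun h => ?_⟩
  have hunit : x ⬝ᵥ star x = 1 := by
    rw [← trace_vecMulVec, trace]
    simp only [diag_apply, hdiag, h]
    exact_mod_cast hsum
  exact ⟨isStarProjection_vecMulVec_star (dotProduct_comm _ x ▸ hunit),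
    by rw [trace_vecMulVec, hunit, Nat.cast_one], h⟩

theorem exists_eq_vecMulVec_star {d : Fin n → ℝ} {P : Matrix (Fin n) (Fin n) ℂ}
    (hP : P ∈ GrassLevel n 1 d) {j : Fin n} (hj : 0 < d j) :
    ∃ x : Fin n → ℂ, P = vecMulVec x (star x) ∧ x j = √(d j) := by
  obtain ⟨hproj, htr, hdiag⟩ := mem_iff_isStarProjection.mp hP
  have hsqrt : (√(d j) : ℂ) ≠ 0 := mod_cast (Real.sqrt_pos.mpr hj).ne'
  have hsq : (d j : ℂ) = √(d j) * √(d j) := mod_cast (Real.mul_self_sqrt hj.le).symm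
  refine ⟨(√(d j) : ℂ)⁻¹ • P.col j,
    eq_vecMulVec_star_of_trace_eq_one hproj (by simpa using htr) ?_ ?_, ?_⟩
  · rw [star_smul, smul_dotProduct, dotProduct_smul,
      star_col_dotProduct_col_of_isStarProjection hproj, hdiag, hsq]
    simp [hsqrt]
  · rw [mulVec_smul, mulVec_col_of_isIdempotentElem hproj.isIdempotentElem]
  · rw [Pi.smul_apply, col_apply, hdiag, hsq, smul_eq_mul, inv_mul_cancel_left₀ hsqrt]

variable {d : Fin (n + 1) → ℝ}

/-- The vector whose coordinates have moduli `√(d i)` and phases `1, z 0, z 1, …`. Fixing the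
zeroth phase picks one vector on each line. -/
noncomputable def phaseVec (d : Fin (n + 1) → ℝ) (z : Fin n → Circle) (i : Fin (n + 1)) : ℂ :=
  √(d i) * (Fin.cons 1 z : Fin (n + 1) → Circle) i

theorem continuous_phaseVec (d : Fin (n + 1) → ℝ) : Continuous (phaseVec d) :=
  have hcons : Continuous fun z : Fin n → Circle => (Fin.cons 1 z : Fin (n + 1) → Circle) :=
    continuous_const.finCons continuous_id
  continuous_pi fun i => continuous_const.mul <|
    continuous_subtype_val.comp <| (continuous_apply i).comp hcons

theorem norm_phaseVec_sq (hd : ∀ i, 0 ≤ d i) (z : Fin n → Circle) (i : Fin (n + 1)) :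
    ‖phaseVec d z i‖ ^ 2 = d i := by
  rw [phaseVec, norm_mul, Circle.norm_coe, mul_one, Complex.norm_real, Real.norm_eq_abs, sq_abs,
    Real.sq_sqrt (hd i)]

theorem vecMulVec_star_phaseVec_injective (hd : ∀ i, 0 < d i) :
    Function.Injective fun z => vecMulVec (phaseVec d z) (star (phaseVec d z)) := by
  intro z w h
  have hsqrt (i : Fin (n + 1)) : √(d i) ≠ 0 := (Real.sqrt_pos.mpr (hd i)).ne'
  ext i
  have hentry := congrFun₂ h i.succ 0
  simpa [vecMulVec_apply, phaseVec, hsqrt] using hentry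

theorem exists_phaseVec_eq {x : Fin (n + 1) → ℂ} (hx : ∀ i, ‖x i‖ ^ 2 = d i)
    (hx₀ : x 0 = √(d 0)) : ∃ z, phaseVec d z = x := by
  have hnorm (i : Fin (n + 1)) : √(d i) = ‖x i‖ := by rw [← hx, Real.sqrt_sq (norm_nonneg _)]
  refine ⟨fun i => Circle.exp (x i.succ).arg, funext <| Fin.cases ?_ fun i => ?_⟩
  · simp [phaseVec, hx₀]
  · rw [phaseVec, hnorm, Fin.cons_succ, Circle.coe_exp, Complex.norm_mul_exp_arg_mul_I]

/-- Rank-one projections with a prescribed positive diagonal, parametrised by relative phases. -/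
noncomputable def torusHomeomorph (hd : ∀ i, 0 < d i) (hsum : ∑ i, d i = 1) :
    (Fin n → Circle) ≃ₜ GrassLevel (n + 1) 1 d :=
  Continuous.homeoOfEquivCompactToT2 (f := Equiv.ofBijective
    (fun z => ⟨vecMulVec (phaseVec d z) (star (phaseVec d z)),
      (vecMulVec_star_mem_iff hsum).mpr (norm_phaseVec_sq (fun i => (hd i).le) z)⟩)
    ⟨fun _ _ h => vecMulVec_star_phaseVec_injective hd (congrArg Subtype.val h), by
      rintro ⟨P, hP⟩
      obtain ⟨x, rfl, hx₀⟩ := exists_eq_vecMulVec_star hP (hd 0)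
      obtain ⟨z, rfl⟩ := exists_phaseVec_eq ((vecMulVec_star_mem_iff hsum).mp hP) hx₀
      exact ⟨z, rfl⟩⟩)
    (((continuous_phaseVec d).matrix_vecMulVec (continuous_phaseVec d).star).subtype_mk _)

end RankOne

end GrassLevel

theorem grassLevel_third_third_third_one_homeo_torus :
    Nonempty (↥(GrassLevel 4 2 ![1/3, 1/3, 1/3, 1]) ≃ₜ
      (↥(Metric.sphere (0 : ℂ) 1) × ↥(Metric.sphere (0 : ℂ) 1))) := by
  have happend : (![1/3, 1/3, 1/3, 1] : Fin 4 → ℝ) =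
      Fin.append ![1/3, 1/3, 1/3] (1 : Fin 1 → ℝ) := by
    ext i
    fin_cases i <;> rfl
  have hpos (i : Fin 3) : (0 : ℝ) < ![1/3, 1/3, 1/3] i := by
    fin_cases i <;> simp
  have hsum : ∑ i, (![1/3, 1/3, 1/3] : Fin 3 → ℝ) i = 1 := by
    norm_num [Fin.sum_univ_succ]
  rw [happend]
  exact ⟨(GrassLevel.appendOneHomeomorph 3 1 1 _).trans <|
    (GrassLevel.torusHomeomorph hpos hsum).symm.trans <|
    Homeomorph.piFinTwo fun _ => Circle⟩
end

section
/- The space 𝓕^{(1/3,1/3,1/3,1)}_{4,2} of normalized tight frames F ∈ Mat_{2×4}(ℂ) with column norms squared (1/3, 1/3, 1/3, 1), with the subspace topology from Mat_{2×4}(ℂ), is not simply connected (its fundamental group is nontrivial). -/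
open Matrix

/-- The space `𝓕ᵈ_{n,k}` of normalized tight frames with prescribed squared column norms `d`. -/
def FrameSpace (n k : ℕ) (d : Fin n → ℝ) : Set (Matrix (Fin k) (Fin n) ℂ) :=
  {F | F * F.conjTranspose = 1 ∧ ∀ j : Fin n, ∑ i : Fin k, ‖F i j‖ ^ 2 = d j}

/-!
A column `f_j` of a normalized tight frame `F` with `‖f_j‖ = 1` is orthogonal to all other columns,
because `Fᴴ F` is a projection. If all but one of `k` chosen columns are unit vectors and the
remaining one is nonzero, the corresponding `k × k` minor therefore vanishes nowhere on the frame
space. Multiplying a frame on the left by `diag(1, …, z, …, 1)` with `z` on the unit circle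
multiplies this minor by `z`, so this circle of frames is a loop on which the minor winds once
around `0`, and it cannot be contracted.
-/

section Topology

variable {X Y : Type*} [TopologicalSpace X] [TopologicalSpace Y]

theorem nontrivial_fundamentalGroup_of_lift_ne {E : Type*} [TopologicalSpace E] {p : E → X}
    (hp : IsCoveringMap p) (f : C(Y, X)) {y : Y} (γ : Path y y) {e₀ e₁ : E} (Γ : Path e₀ e₁)
    (hΓ : ∀ t, p (Γ t) = f (γ t)) (hne : e₀ ≠ e₁) : Nontrivial (FundamentalGroup Y y) := by
  by_contra htriv
  have := not_nontrivial_iff_subsingleton.mp htriv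
  have hγ : γ.Homotopic (.refl y) :=
    Quotient.eq.mp (Subsingleton.elim (α := FundamentalGroup Y y) _ _)
  have h₀ : f y = p e₀ := by simpa using (hΓ 0).symm
  have hlift : Γ.toContinuousMap = hp.liftPath (γ.map f.continuous) e₀ (by simpa) :=
    (hp.eq_liftPath_iff' _).mpr ⟨funext hΓ, Γ.source⟩
  refine hne (Eq.symm ?_)
  calc e₁ = hp.liftPath (γ.map f.continuous) e₀ (by simpa) 1 := by rw [← hlift]; exact Γ.target.symm
    _ = hp.liftPath (.const _ (f y)) e₀ h₀ 1 :=
      hp.liftPath_apply_one_eq_of_homotopicRel (hγ.map f) e₀ (by simpa) h₀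
    _ = e₀ := by rw [hp.liftPath_const h₀, ContinuousMap.const_apply]

theorem nontrivial_fundamentalGroup_of_circle_winding (s : C(Circle, Y)) {y : Y} (hs : s 1 = y)
    {f : Y → ℂ} (hf : Continuous f) (hf₀ : ∀ y, f y ≠ 0) (hfs : ∀ z, f (s z) = z * f y) :
    Nontrivial (FundamentalGroup Y y) := by
  obtain ⟨w, hw⟩ : ∃ w, Complex.exp w = f y := ⟨_, Complex.exp_log (hf₀ y)⟩
  let γ : Path y y :=
    { toFun := fun t ↦ s (Circle.exp (2 * Real.pi * t))
      source' := by simp [hs]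
      target' := by simp [hs] }
  let Γ : Path w (2 * Real.pi * Complex.I + w) :=
    { toFun := fun t ↦ (2 * Real.pi * t : ℝ) * Complex.I + w
      source' := by simp
      target' := by simp }
  refine nontrivial_fundamentalGroup_of_lift_ne Complex.isCoveringMap_exp
    ⟨fun y ↦ (⟨f y, hf₀ y⟩ : {z : ℂ // z ≠ 0}), by fun_prop⟩ γ Γ (fun t ↦ Subtype.ext ?_) ?_
  · calc Complex.exp ((2 * Real.pi * t : ℝ) * Complex.I + w)
        = Circle.exp (2 * Real.pi * t) * f y := by rw [Complex.exp_add, hw, Circle.coe_exp]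
      _ = f (γ t) := (hfs _).symm
  · simp

end Topology

section Matrix

variable {m n : Type*} [Fintype m]

theorem isStarProjection_conjTranspose_mul_self {R : Type*} [Semiring R] [StarRing R]
    [Fintype n] [DecidableEq m] {F : Matrix m n R} (hF : F * Fᴴ = 1) :
    IsStarProjection (Fᴴ * F) where
  isIdempotentElem := by
    rw [IsIdempotentElem, Matrix.mul_assoc, ← Matrix.mul_assoc F, hF, Matrix.one_mul]
  isSelfAdjoint := isHermitian_conjTranspose_mul_self F

theorem apply_eq_zero_of_isStarProjection_of_apply_self_eq_zero {R : Type*} [Ring R]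
    [PartialOrder R] [StarRing R] [StarOrderedRing R] [NoZeroDivisors R] {P : Matrix m m R}
    (hP : IsStarProjection P) {j : m} (hj : P j j = 0) (i : m) : P i j = 0 := by
  have hcol : star (P.col j) ⬝ᵥ P.col j = 0 :=
    calc star (P.col j) ⬝ᵥ P.col j = (star P * P) j j := rfl
      _ = 0 := by rw [hP.isSelfAdjoint.star_eq, hP.isIdempotentElem.eq, hj]
  exact congrFun (dotProduct_star_self_eq_zero.mp hcol) i

theorem apply_eq_zero_of_isStarProjection_of_apply_self_eq_one {R : Type*} [Ring R]
    [PartialOrder R] [StarRing R] [StarOrderedRing R] [NoZeroDivisors R] {P : Matrix m m R}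
    (hP : IsStarProjection P) {i j : m} (hj : P j j = 1) (hij : i ≠ j) : P i j = 0 := by
  classical
  simpa [hij] using
    apply_eq_zero_of_isStarProjection_of_apply_self_eq_zero hP.one_sub (j := j) (by simp [hj]) i

theorem conjTranspose_mul_self_apply_self {𝕜 : Type*} [RCLike 𝕜] (F : Matrix m n 𝕜) (j : n) :
    (Fᴴ * F) j j = (∑ i, ‖F i j‖ ^ 2 : ℝ) := by
  simp [Matrix.mul_apply, RCLike.conj_mul]

theorem diagonal_mulSingle_mem_unitaryGroup {R : Type*} [CommRing R] [StarRing R] [DecidableEq m]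
    (i : m) {u : R} (hu : u ∈ unitary R) : diagonal (Pi.mulSingle i u) ∈ unitaryGroup m R := by
  rw [mem_unitaryGroup_iff, star_eq_conjTranspose, diagonal_conjTranspose, diagonal_mul_diagonal,
    diagonal_eq_one]
  ext l
  rcases eq_or_ne l i with rfl | hl
  · simp [Unitary.mul_star_self_of_mem hu]
  · simp [hl]

theorem coe_circle_mem_unitary (z : Circle) : (z : ℂ) ∈ unitary ℂ := by
  simp [Unitary.mem_iff_self_mul_star, Complex.mul_conj]

end Matrix

namespace FrameSpace

variable {n k : ℕ} {d : Fin n → ℝ}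

theorem mem_iff {F : Matrix (Fin k) (Fin n) ℂ} :
    F ∈ FrameSpace n k d ↔ F * Fᴴ = 1 ∧ ∀ j, (Fᴴ * F) j j = d j := by
  simp only [conjTranspose_mul_self_apply_self, FrameSpace, Set.mem_ofPred_eq,
    Complex.coe_algebraMap, Complex.ofReal_inj]

theorem unitary_mul_mem {U : Matrix (Fin k) (Fin k) ℂ} (hU : U ∈ unitaryGroup (Fin k) ℂ)
    {F : Matrix (Fin k) (Fin n) ℂ} (hF : F ∈ FrameSpace n k d) : U * F ∈ FrameSpace n k d := by
  obtain ⟨htight, hnorm⟩ := mem_iff.mp hF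
  refine mem_iff.mpr ⟨?_, fun j ↦ ?_⟩
  · calc U * F * (U * F)ᴴ = U * (F * Fᴴ) * Uᴴ := by
          simp only [conjTranspose_mul, Matrix.mul_assoc]
      _ = 1 := by rw [htight, Matrix.mul_one]; exact mem_unitaryGroup_iff.mp hU
  · calc ((U * F)ᴴ * (U * F)) j j = (Fᴴ * (Uᴴ * U) * F) j j := by
          simp only [conjTranspose_mul, Matrix.mul_assoc]
      _ = d j := by
          rw [← star_eq_conjTranspose U, mem_unitaryGroup_iff'.mp hU, Matrix.mul_one, hnorm]

open scoped ComplexOrder in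
theorem conjTranspose_mul_self_apply_eq_zero {F : Matrix (Fin k) (Fin n) ℂ}
    (hF : F ∈ FrameSpace n k d) {i j : Fin n} (hj : d j = 1) (hij : i ≠ j) :
    (Fᴴ * F) i j = 0 := by
  obtain ⟨htight, hnorm⟩ := mem_iff.mp hF
  exact apply_eq_zero_of_isStarProjection_of_apply_self_eq_one
    (isStarProjection_conjTranspose_mul_self htight) (by simp [hnorm, hj]) hij

theorem gram_submatrix_eq_diagonal {c : Fin k → Fin n} (hc : c.Injective) {i₀ : Fin k}
    (h₁ : ∀ i ≠ i₀, d (c i) = 1) {F : Matrix (Fin k) (Fin n) ℂ} (hF : F ∈ FrameSpace n k d) :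
    (F.submatrix id c)ᴴ * F.submatrix id c = diagonal fun i ↦ (d (c i) : ℂ) := by
  rw [conjTranspose_submatrix, ← submatrix_mul _ _ _ _ _ Function.bijective_id]
  ext i j
  rcases eq_or_ne i j with rfl | hij
  · simp [(mem_iff.mp hF).2]
  rw [submatrix_apply, diagonal_apply_ne _ hij]
  rcases eq_or_ne j i₀ with rfl | hj
  · rw [← (isHermitian_conjTranspose_mul_self F).apply,
      conjTranspose_mul_self_apply_eq_zero hF (h₁ i hij) (hc.ne hij.symm), star_zero]
  · exact conjTranspose_mul_self_apply_eq_zero hF (h₁ j hj) (hc.ne hij)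

theorem det_submatrix_ne_zero {c : Fin k → Fin n} (hc : c.Injective) {i₀ : Fin k}
    (h₀ : d (c i₀) ≠ 0) (h₁ : ∀ i ≠ i₀, d (c i) = 1) {F : Matrix (Fin k) (Fin n) ℂ}
    (hF : F ∈ FrameSpace n k d) : (F.submatrix id c).det ≠ 0 := by
  have hd (i : Fin k) : d (c i) ≠ 0 := by
    rcases eq_or_ne i i₀ with rfl | hi
    · exact h₀
    · simp [h₁ i hi]
  refine right_ne_zero_of_mul (a := (F.submatrix id c)ᴴ.det) ?_
  rw [← det_mul, gram_submatrix_eq_diagonal hc h₁ hF, det_diagonal]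
  exact_mod_cast Finset.prod_ne_zero_iff.mpr fun i _ ↦ hd i

theorem nontrivial_fundamentalGroup_of_det_submatrix_ne_zero [NeZero k] (c : Fin k → Fin n)
    (hc : ∀ F ∈ FrameSpace n k d, (F.submatrix id c).det ≠ 0) (F : FrameSpace n k d) :
    Nontrivial (FundamentalGroup (FrameSpace n k d) F) := by
  let U (z : Circle) : Matrix (Fin k) (Fin k) ℂ := diagonal (Pi.mulSingle 0 (z : ℂ))
  have hU (z : Circle) : U z ∈ unitaryGroup (Fin k) ℂ :=
    diagonal_mulSingle_mem_unitaryGroup 0 (coe_circle_mem_unitary z)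
  have hUcont : Continuous U :=
    ((continuous_mulSingle 0).comp continuous_subtype_val).matrix_diagonal
  let s : C(Circle, FrameSpace n k d) :=
    { toFun := fun z ↦ ⟨U z * F.1, unitary_mul_mem (hU z) F.2⟩
      continuous_toFun := by fun_prop }
  have hs : s 1 = F := Subtype.ext (by simp [s, U])
  refine nontrivial_fundamentalGroup_of_circle_winding s hs
    (f := fun G ↦ (G.1.submatrix id c).det) (by fun_prop) (fun G ↦ hc G.1 G.2) fun z ↦ ?_
  calc ((U z * F.1).submatrix id c).det = (U z * F.1.submatrix id c).det := rfl
    _ = z * (F.1.submatrix id c).det := by rw [det_mul, det_diagonal, Fintype.prod_pi_mulSingle']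

theorem third_third_third_one_nonempty : (FrameSpace 4 2 ![1/3, 1/3, 1/3, 1]).Nonempty := by
  obtain ⟨a, ha⟩ : ∃ a : ℝ, a ^ 2 = 1 / 3 := ⟨√(1 / 3), Real.sq_sqrt (by norm_num)⟩
  have hmul : (a : ℂ) * a = 1 / 3 := by
    rw [← sq, ← Complex.ofReal_pow, ha]
    norm_num
  refine ⟨!![a, a, a, 0; 0, 0, 0, 1], ?_, fun j ↦ ?_⟩
  · ext i j
    fin_cases i <;> fin_cases j <;> simp [Matrix.mul_apply, Fin.sum_univ_four, hmul]
    norm_num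
  · fin_cases j <;> simp [Fin.sum_univ_two, ha]

end FrameSpace

theorem frameSpace_third_third_third_one_not_simplyConnected_general {n k : ℕ} {d : Fin n → ℝ}
    {c : Fin k → Fin n} (hc : c.Injective) {i₀ : Fin k} (h₀ : d (c i₀) ≠ 0)
    (h₁ : ∀ i ≠ i₀, d (c i) = 1) (F : FrameSpace n k d) :
    Nontrivial (FundamentalGroup (FrameSpace n k d) F) :=
  have : NeZero k := .of_pos i₀.pos
  FrameSpace.nontrivial_fundamentalGroup_of_det_submatrix_ne_zero c
    (fun _ ↦ FrameSpace.det_submatrix_ne_zero hc h₀ h₁) F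

theorem frameSpace_third_third_third_one_not_simplyConnected :
    ¬ SimplyConnectedSpace ↥(FrameSpace 4 2 ![1/3, 1/3, 1/3, 1]) := by
  intro hX
  obtain ⟨F, hF⟩ := FrameSpace.third_third_third_one_nonempty
  exact not_subsingleton_iff_nontrivial.mpr
    (frameSpace_third_third_third_one_not_simplyConnected_general (c := ![3, 0]) (i₀ := 1)
      (by decide) (by simp) (by simp [Fin.forall_fin_two]) ⟨F, hF⟩) inferInstance
end
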